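/- For every n ≥ 1 there is a constant C(n) with the following property. Let 0 < ε ≤ 1/2, let a > 3, let B be the unit ball of ℝⁿ centered at the origin, and let E ⊆ (2B)ᶜ be a measurable set with |E ∩ aB| < ε. Then there exists a locally integrable function f on ℝⁿ such that f = 0 on E, f = 1 on B, and the BMO seminorm of f satisfies sup_Q ⨍_Q |f − ⨍_Q f| ≤ C(n) / min{log a, log(1/ε)}, where the supremum is over all axis-parallel cubes Q ⊆ ℝⁿ and ⨍_Q denotes the average over Q. -/

import Mathlib

open Metric MeasureTheory

/-- The axis-parallel cube with lower corner `z` and side length `l`. -/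
def axisCube {n : ℕ} (z : EuclideanSpace ℝ (Fin n)) (l : ℝ) :
    Set (EuclideanSpace ℝ (Fin n)) :=
  {y | ∀ i, z i ≤ y i ∧ y i ≤ z i + l}

abbrev Eu (n : ℕ) := EuclideanSpace ℝ (Fin n)

lemma vol_scale {n : ℕ} (y y' : Eu n) {s ρ : ℝ} (hs : 0 < s) (hρ : 0 < ρ) :
    volume (ball y (s * ρ)) = ENNReal.ofReal s ^ n * volume (ball y' ρ) := by
  rw [Measure.addHaar_ball_of_pos _ _ (mul_pos hs hρ), Measure.addHaar_ball_of_pos _ y' hρ,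
    finrank_euclideanSpace_fin, mul_pow, ENNReal.ofReal_mul (by positivity),
    ENNReal.ofReal_pow hs.le, mul_assoc]

lemma vol_scale_closed {n : ℕ} (y y' : Eu n) {s ρ : ℝ} (hs : 0 < s) (hρ : 0 < ρ) :
    volume (closedBall y (s * ρ)) = ENNReal.ofReal s ^ n * volume (ball y' ρ) := by
  rw [← vol_scale y y' hs hρ, Measure.addHaar_closedBall _ _ (by positivity),
    Measure.addHaar_ball_of_pos _ y (mul_pos hs hρ)]

/-- The set where the (uncentered) maximal function of `U` exceeds `2⁻ᵏ`. -/
def lev {n : ℕ} (U : Set (Eu n)) (k : ℕ) : Set (Eu n) :=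
  ⋃ p ∈ {p : Eu n × ℝ | 0 < p.2 ∧
    volume (ball p.1 p.2) < 2 ^ k * volume (U ∩ ball p.1 p.2)}, ball p.1 p.2

lemma mem_lev {n : ℕ} {U : Set (Eu n)} {k : ℕ} {x : Eu n} :
    x ∈ lev U k ↔ ∃ y : Eu n, ∃ ρ : ℝ, 0 < ρ ∧
      volume (ball y ρ) < 2 ^ k * volume (U ∩ ball y ρ) ∧ x ∈ ball y ρ := by
  simp only [lev, Set.mem_iUnion, Set.mem_ofPred_eq, Prod.exists, exists_prop, and_assoc]

lemma isOpen_lev {n : ℕ} (U : Set (Eu n)) (k : ℕ) : IsOpen (lev U k) :=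
  isOpen_biUnion fun _ _ => isOpen_ball

lemma lev_mono {n : ℕ} (U : Set (Eu n)) {j k : ℕ} (h : j ≤ k) : lev U j ⊆ lev U k := by
  intro x hx
  rw [mem_lev] at hx ⊢
  obtain ⟨y, ρ, h0, h1, h2⟩ := hx
  refine ⟨y, ρ, h0, h1.trans_le ?_, h2⟩
  gcongr
  norm_num

lemma not_lev {n : ℕ} {U : Set (Eu n)} {k : ℕ} {x : Eu n} (h : x ∉ lev U k) {y : Eu n} {ρ : ℝ}
    (hρ : 0 < ρ) (hx : x ∈ ball y ρ) : 2 ^ k * volume (U ∩ ball y ρ) ≤ volume (ball y ρ) := by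
  by_contra hc
  exact h (mem_lev.2 ⟨y, ρ, hρ, not_le.1 hc, hx⟩)

lemma level_bound {n : ℕ} {U : Set (Eu n)} (hU : MeasurableSet U) {K : ℝ} (hK : 0 < K)
    {c : Eu n} {r : ℝ} (hr : 0 < r) {Q : Set (Eu n)} (hQ : Q ⊆ ball c (K * r)) {m k : ℕ}
    {x₀ : Eu n} (hx₀ : x₀ ∈ Q) (hx₀m : x₀ ∉ lev U m) :
    2 ^ m * volume (Q ∩ lev U k) ≤
      ENNReal.ofReal (5 * (2 * K + 1) * (K + 2)) ^ n * 2 ^ k * volume (ball c r) := by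
  by_cases hbig : ∃ y : Eu n, ∃ ρ : ℝ, r ≤ ρ ∧ volume (ball y ρ) < 2 ^ k * volume (U ∩ ball y ρ) ∧
      (ball y ρ ∩ Q).Nonempty
  · obtain ⟨y, ρ, hrρ, hlt, x, hxy, hxQ⟩ := hbig
    have hρ : 0 < ρ := hr.trans_le hrρ
    have hxx : dist x₀ y < (2 * K + 1) * ρ := by
      have h1 := mem_ball.1 (hQ hxQ)
      have h2 := mem_ball.1 (hQ hx₀)
      have h3 := mem_ball.1 hxy
      have h4 : K * r ≤ K * ρ := by gcongr
      have h5 := dist_triangle x₀ c y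
      have h6 := dist_triangle c x y
      rw [dist_comm c x] at h6
      nlinarith
    have h1 := not_lev hx₀m (y := y) (ρ := (2 * K + 1) * ρ) (by positivity) hxx
    have hsub : ball y ρ ⊆ ball y ((2 * K + 1) * ρ) := ball_subset_ball (by nlinarith)
    rw [vol_scale y y (by positivity) hρ] at h1
    have hv0 : volume (ball y ρ) ≠ 0 := (measure_ball_pos _ _ hρ).ne'
    have hvt : volume (ball y ρ) ≠ ⊤ := measure_ball_lt_top.ne
    have h2 : 2 ^ m * volume (ball y ρ) ≤
        (2 ^ k * ENNReal.ofReal (2 * K + 1) ^ n) * volume (ball y ρ) := by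
      calc 2 ^ m * volume (ball y ρ) ≤ 2 ^ m * (2 ^ k * volume (U ∩ ball y ρ)) := by gcongr
        _ = 2 ^ k * (2 ^ m * volume (U ∩ ball y ρ)) := by ring
        _ ≤ 2 ^ k * (2 ^ m * volume (U ∩ ball y ((2 * K + 1) * ρ))) := by gcongr
        _ ≤ 2 ^ k * (ENNReal.ofReal (2 * K + 1) ^ n * volume (ball y ρ)) := by gcongr
        _ = _ := by ring
    rw [ENNReal.mul_le_mul_iff_left hv0 hvt] at h2
    calc 2 ^ m * volume (Q ∩ lev U k)
        ≤ (2 ^ k * ENNReal.ofReal (2 * K + 1) ^ n) * volume (ball c (K * r)) := by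
          gcongr
          exact Set.inter_subset_left.trans hQ
      _ = (ENNReal.ofReal ((2 * K + 1) * K)) ^ n * 2 ^ k * volume (ball c r) := by
          rw [vol_scale c c hK hr, ENNReal.ofReal_mul (by positivity)]; ring
      _ ≤ _ := by
          gcongr <;> nlinarith
  · push Not at hbig
    let t : Set (Eu n × ℝ) := {p | 0 < p.2 ∧
      volume (ball p.1 p.2) < 2 ^ k * volume (U ∩ ball p.1 p.2) ∧ (ball p.1 p.2 ∩ Q).Nonempty}
    have ht : ∀ p ∈ t, p.2 < r := by
      rintro ⟨y, ρ⟩ ⟨h0, h1, h2⟩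
      by_contra hc
      exact h2.ne_empty (hbig y ρ (not_lt.1 hc) h1)
    obtain ⟨u, hut, hdisj, hcov⟩ := Vitali.exists_disjoint_subfamily_covering_enlargement_closedBall
      t (fun p => p.1) (fun p => p.2) r (fun p hp => (ht p hp).le) 5 (by norm_num)
    have hdisj' : u.PairwiseDisjoint (fun p => ball p.1 p.2) :=
      hdisj.mono (fun p => ball_subset_closedBall)
    have hcount : u.Countable := hdisj'.countable_of_isOpen (fun _ _ => isOpen_ball)
      (fun p hp => nonempty_ball.2 (hut hp).1)
    have hsub : Q ∩ lev U k ⊆ ⋃ p ∈ u, closedBall p.1 (5 * p.2) := by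
      rintro x ⟨hxQ, hx⟩
      obtain ⟨y, ρ, h0, h1, h2⟩ := mem_lev.1 hx
      obtain ⟨b, hb, hb2⟩ := hcov (y, ρ) ⟨h0, h1, x, h2, hxQ⟩
      exact Set.mem_biUnion hb (hb2 (ball_subset_closedBall h2))
    have hsub2 : (⋃ p ∈ u, (U ∩ ball p.1 p.2)) ⊆ U ∩ ball c ((K + 2) * r) := by
      intro x hx
      simp only [Set.mem_iUnion] at hx
      obtain ⟨p, hp, hxU, hxp⟩ := hx
      refine ⟨hxU, ?_⟩
      obtain ⟨h0, h1, w, hw, hwQ⟩ := hut hp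
      have h2 := mem_ball.1 hxp
      have h3 := mem_ball.1 hw
      have h4 := mem_ball.1 (hQ hwQ)
      have h5 := ht p (hut hp)
      have h6 := dist_triangle x p.1 c
      have h7 := dist_triangle p.1 w c
      rw [dist_comm p.1 w] at h7
      rw [mem_ball]
      nlinarith
    have hx₀b : x₀ ∈ ball c ((K + 2) * r) := ball_subset_ball (by nlinarith) (hQ hx₀)
    have hn := not_lev hx₀m (by positivity) hx₀b
    calc 2 ^ m * volume (Q ∩ lev U k)
        ≤ 2 ^ m * ∑' p : u, volume (closedBall p.1.1 (5 * p.1.2)) := by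
          gcongr
          exact (measure_mono hsub).trans (measure_biUnion_le _ hcount _)
      _ ≤ 2 ^ m * ∑' p : u, (ENNReal.ofReal 5 ^ n * 2 ^ k) * volume (U ∩ ball p.1.1 p.1.2) := by
          gcongr with p
          rw [vol_scale_closed p.1.1 p.1.1 (by norm_num) (hut p.2).1, mul_assoc]
          gcongr
          exact (hut p.2).2.1.le
      _ = (ENNReal.ofReal 5 ^ n * 2 ^ k) * (2 ^ m * volume (⋃ p ∈ u, (U ∩ ball p.1 p.2))) := by
          rw [ENNReal.tsum_mul_left, measure_biUnion hcount
            (hdisj'.mono fun p => Set.inter_subset_right)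
            (fun p _ => hU.inter measurableSet_ball)]
          ring
      _ ≤ (ENNReal.ofReal 5 ^ n * 2 ^ k) * volume (ball c ((K + 2) * r)) := by
          gcongr
          refine le_trans ?_ hn
          gcongr
      _ = (ENNReal.ofReal (5 * (K + 2))) ^ n * 2 ^ k * volume (ball c r) := by
          rw [vol_scale c c (by positivity) hr, ENNReal.ofReal_mul (by positivity)]; ring
      _ ≤ _ := by
          gcongr
          nlinarith

/-- Sum of the indicators of the level sets. -/
noncomputable def lsum {n : ℕ} (U : Set (Eu n)) (N : ℕ) (x : Eu n) : ℝ :=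
  ∑ k ∈ Finset.range N, (lev U (k + 1)).indicator (fun _ => (1 : ℝ)) x

lemma measurable_lsum {n : ℕ} (U : Set (Eu n)) (N : ℕ) : Measurable (lsum U N) := by
  unfold lsum
  exact Finset.measurable_sum _ fun k _ => measurable_const.indicator (isOpen_lev U _).measurableSet

lemma lsum_nonneg {n : ℕ} (U : Set (Eu n)) (N : ℕ) (x : Eu n) : 0 ≤ lsum U N x :=
  Finset.sum_nonneg fun _ _ => Set.indicator_nonneg (fun _ _ => zero_le_one) _

lemma lsum_le {n : ℕ} (U : Set (Eu n)) (N : ℕ) (x : Eu n) : lsum U N x ≤ N := by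
  unfold lsum
  calc _ ≤ ∑ k ∈ Finset.range N, (1 : ℝ) :=
        Finset.sum_le_sum fun _ _ => Set.indicator_le_self' (fun _ _ => zero_le_one) _
    _ = N := by simp

lemma lsum_eq {n : ℕ} {U : Set (Eu n)} (hU : IsOpen U) (N : ℕ) {x : Eu n} (hx : x ∈ U) :
    lsum U N x = N := by
  have h1 : x ∈ lev U 1 := by
    obtain ⟨ρ, hρ, hsub⟩ := Metric.isOpen_iff.1 hU x hx
    refine mem_lev.2 ⟨x, ρ, hρ, ?_, mem_ball_self hρ⟩
    rw [Set.inter_eq_self_of_subset_right hsub, pow_one, two_mul]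
    exact ENNReal.lt_add_right measure_ball_lt_top.ne (measure_ball_pos _ _ hρ).ne'
  unfold lsum
  rw [Finset.sum_congr rfl fun k _ => Set.indicator_of_mem (lev_mono U (Nat.le_add_left 1 k) h1) _]
  simp

lemma lsum_eq_zero {n : ℕ} {U : Set (Eu n)} {N : ℕ} {x : Eu n} (hx : x ∉ lev U N) :
    lsum U N x = 0 := by
  unfold lsum
  refine Finset.sum_eq_zero fun k hk => Set.indicator_of_notMem (fun h => hx ?_) _
  exact lev_mono U (Finset.mem_range.1 hk) h

lemma lsum_osc {n : ℕ} {U : Set (Eu n)} (hU : MeasurableSet U) {K : ℝ} (hK : 0 < K)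
    {c : Eu n} {r : ℝ} (hr : 0 < r) {Q : Set (Eu n)} (hQm : MeasurableSet Q)
    (hQ : Q ⊆ ball c (K * r)) (hQ' : ball c r ⊆ Q) (N : ℕ) :
    ∃ b : ℝ, ∫ x in Q, |lsum U N x - b| ≤
      2 * (5 * (2 * K + 1) * (K + 2)) ^ n * volume.real Q := by
  classical
  have hQfin : volume Q ≠ ⊤ := ((measure_mono hQ).trans_lt measure_ball_lt_top).ne
  have hex : ∃ m, ∀ k, m ≤ k → k < N → Q ⊆ lev U (k + 1) := ⟨N, fun k h1 h2 => by omega⟩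
  obtain ⟨m, hm, hmin⟩ : ∃ m, (∀ k, m ≤ k → k < N → Q ⊆ lev U (k + 1)) ∧
      ∀ j < m, ¬ (∀ k, j ≤ k → k < N → Q ⊆ lev U (k + 1)) :=
    ⟨Nat.find hex, Nat.find_spec hex, fun j hj => Nat.find_min hex hj⟩
  have hmN : m ≤ N := by
    by_contra h
    exact hmin N (by omega) (fun k h1 h2 => by omega)
  have hb : ∀ k ∈ Finset.range m, volume.real (lev U (k + 1) ∩ Q) ≤
      (5 * (2 * K + 1) * (K + 2)) ^ n * volume.real Q / 2 ^ m * 2 ^ (k + 1) := by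
    intro k hk
    have hk := Finset.mem_range.1 hk
    have h1 := hmin (m - 1) (by omega)
    push Not at h1
    obtain ⟨j, hj1, hj2, hj3⟩ := h1
    obtain ⟨x₀, hx₀, hx₀'⟩ := Set.not_subset.1 hj3
    have hx₀m : x₀ ∉ lev U m := fun h => hx₀' (lev_mono U (by omega) h)
    have h2 := (level_bound hU hK hr hQ hx₀ hx₀m (k := k + 1)).trans
      (mul_le_mul_right (measure_mono hQ') _)
    have h3 := ENNReal.toReal_mono (by finiteness) h2
    simp only [ENNReal.toReal_mul, ENNReal.toReal_pow, ENNReal.toReal_ofNat] at h3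
    rw [ENNReal.toReal_ofReal (by positivity)] at h3
    rw [Set.inter_comm, div_mul_eq_mul_div, le_div_iff₀ (by positivity)]
    simp only [Measure.real]
    linarith
  refine ⟨(N - m : ℕ), ?_⟩
  have heq : ∀ x ∈ Q, |lsum U N x - (N - m : ℕ)| =
      ∑ k ∈ Finset.range m, (lev U (k + 1)).indicator (fun _ => (1 : ℝ)) x := by
    intro x hx
    have h1 : lsum U N x - (N - m : ℕ) =
        ∑ k ∈ Finset.range m, (lev U (k + 1)).indicator (fun _ => (1 : ℝ)) x := by
      unfold lsum
      rw [← Finset.sum_range_add_sum_Ico _ hmN, Finset.sum_congr (s₁ := Finset.Ico m N) rfl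
        (fun k hk => Set.indicator_of_mem
          (hm k (Finset.mem_Ico.1 hk).1 (Finset.mem_Ico.1 hk).2 hx) _)]
      simp
    rw [h1, abs_of_nonneg]
    exact Finset.sum_nonneg fun _ _ => Set.indicator_nonneg (fun _ _ => zero_le_one) _
  rw [setIntegral_congr_fun hQm heq, integral_finsetSum]
  · have h2 : ∀ k, ∫ x in Q, (lev U (k + 1)).indicator (fun _ => (1 : ℝ)) x =
        volume.real (lev U (k + 1) ∩ Q) := by
      intro k
      rw [integral_indicator (isOpen_lev U _).measurableSet,
        Measure.restrict_restrict (isOpen_lev U _).measurableSet]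
      simp
    simp_rw [h2]
    refine (Finset.sum_le_sum hb).trans ?_
    rw [← Finset.mul_sum]
    have h3 : ∑ k ∈ Finset.range m, (2 : ℝ) ^ (k + 1) ≤ 2 * 2 ^ m := by
      simp_rw [pow_succ]
      rw [← Finset.sum_mul, geom_sum_eq (by norm_num)]
      linarith
    calc _ ≤ (5 * (2 * K + 1) * (K + 2)) ^ n * volume.real Q / 2 ^ m * (2 * 2 ^ m) := by gcongr
      _ = _ := by field_simp
  · intro k _
    exact (integrableOn_const hQfin).indicator (isOpen_lev U _).measurableSet

lemma avg_osc {n : ℕ} {Q : Set (Eu n)} (h0 : volume Q ≠ 0) (hfin : volume Q ≠ ⊤) {f : Eu n → ℝ}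
    (hf : IntegrableOn f Q) (b D : ℝ) (hb : ∫ x in Q, |f x - b| ≤ D * volume.real Q) :
    ⨍ y in Q, |f y - ⨍ w in Q, f w| ≤ 2 * D := by
  have hpos : 0 < volume.real Q := ENNReal.toReal_pos h0 hfin
  set A := ⨍ w in Q, f w with hA
  have hA' : volume.real Q * A = ∫ x in Q, f x := by
    rw [hA, setAverage_eq, smul_eq_mul, mul_inv_cancel_left₀ hpos.ne']
  have hi : IntegrableOn (fun x => |f x - b|) Q := (hf.sub (integrableOn_const hfin)).abs
  have h1 : volume.real Q * |b - A| ≤ ∫ x in Q, |f x - b| := by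
    have h2 : ∫ x in Q, (f x - b) = volume.real Q * (A - b) := by
      rw [integral_sub hf (integrableOn_const hfin)]
      simp
      linarith
    have h3 := abs_integral_le_integral_abs (μ := volume.restrict Q) (f := fun x => f x - b)
    rw [h2, abs_mul, abs_of_pos hpos, abs_sub_comm] at h3
    exact h3
  have h4 : ∫ x in Q, |f x - A| ≤ ∫ x in Q, (|f x - b| + |b - A|) := by
    apply integral_mono
    · exact (hf.sub (integrableOn_const hfin)).abs
    · exact hi.add (integrableOn_const hfin)
    · intro x
      exact abs_sub_le _ _ _
  rw [integral_add hi (integrableOn_const hfin)] at h4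
  simp only [integral_const, smul_eq_mul, measureReal_restrict_apply_univ] at h4
  rw [setAverage_eq, smul_eq_mul, inv_mul_le_iff₀ hpos]
  linarith

lemma cube_facts {n : ℕ} (hn : 1 ≤ n) (z : Eu n) {l : ℝ} (hl : 0 < l) :
    MeasurableSet (axisCube z l) ∧ ∃ c : Eu n, ball c (l / 2) ⊆ axisCube z l ∧
      axisCube z l ⊆ ball c ((2 * n) * (l / 2)) := by
  refine ⟨?_, WithLp.toLp 2 (fun i => z i + l / 2), ?_, ?_⟩
  · have : axisCube z l = ⋂ i, {y : Eu n | z i ≤ y i ∧ y i ≤ z i + l} := by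
      ext y; simp [axisCube]
    rw [this]
    refine (isClosed_iInter fun i => ?_).measurableSet
    have h1 : IsClosed {y : Eu n | z i ≤ y i} := isClosed_le (by fun_prop) (by fun_prop)
    have h2 : IsClosed {y : Eu n | y i ≤ z i + l} := isClosed_le (by fun_prop) (by fun_prop)
    exact h1.inter h2
  · intro y hy i
    rw [mem_ball, dist_eq_norm] at hy
    have h := (PiLp.norm_apply_le (y - WithLp.toLp 2 (fun i => z i + l / 2)) i).trans_lt hy
    simp only [PiLp.sub_apply, Real.norm_eq_abs] at h
    rw [abs_lt] at h
    constructor <;> linarith [h.1, h.2]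
  · intro y hy
    rw [mem_ball, dist_eq_norm]
    have h1 : ∀ i, |(y - WithLp.toLp 2 (fun i => z i + l / 2) : Eu n) i| ≤ l / 2 := by
      intro i
      have := hy i
      simp only [PiLp.sub_apply]
      rw [abs_le]
      constructor <;> linarith [this.1, this.2]
    have hn' : (1 : ℝ) ≤ n := by exact_mod_cast hn
    rw [EuclideanSpace.norm_eq, Real.sqrt_lt' (by positivity)]
    calc _ ≤ ∑ i : Fin n, (l / 2) ^ 2 := by
          refine Finset.sum_le_sum fun i _ => ?_
          rw [Real.norm_eq_abs]
          exact pow_le_pow_left₀ (abs_nonneg _) (h1 i) 2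
      _ = n * (l / 2) ^ 2 := by simp
      _ < _ := by
          have : 0 < (l / 2) ^ 2 := by positivity
          rw [mul_pow]
          gcongr
          nlinarith

lemma not_mem_lev_near {n : ℕ} {U : Set (Eu n)} {ε : ℝ} (hε : 0 < ε) {N : ℕ}
    (hU : U ⊆ (closedBall (0 : Eu n) (3 / 2))ᶜ) (hUε : volume U < ENNReal.ofReal ε)
    (hN : 2 ^ N * ε ≤ volume.real (ball (0 : Eu n) (1 / 4))) {x : Eu n}
    (hx : x ∈ ball (0 : Eu n) 1) : x ∉ lev U N := by
  intro h
  obtain ⟨y, ρ, hρ, hlt, hxy⟩ := mem_lev.1 h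
  have hne : (U ∩ ball y ρ).Nonempty := by
    rw [Set.nonempty_iff_ne_empty]
    intro he
    simp [he] at hlt
  obtain ⟨w, hwU, hwy⟩ := hne
  have hρ4 : 1 / 4 ≤ ρ := by
    have h1 := hU hwU
    simp only [Set.mem_compl_iff, mem_closedBall, not_le] at h1
    have h2 := mem_ball.1 hx
    have h3 := mem_ball.1 hxy
    have h4 := mem_ball.1 hwy
    have h5 := dist_triangle w y 0
    have h6 := dist_triangle y x 0
    rw [dist_comm y x] at h6
    linarith
  have h1 : volume (ball y (1 / 4)) < 2 ^ N * ENNReal.ofReal ε :=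
    calc volume (ball y (1 / 4)) ≤ volume (ball y ρ) := measure_mono (ball_subset_ball hρ4)
      _ < 2 ^ N * volume (U ∩ ball y ρ) := hlt
      _ ≤ 2 ^ N * ENNReal.ofReal ε := by
        gcongr
        exact (measure_mono Set.inter_subset_left).trans hUε.le
  have h2 : volume (ball y (1 / 4)) = volume (ball (0 : Eu n) (1 / 4)) := by
    have := vol_scale y (0 : Eu n) (s := 1) (ρ := 1 / 4) (by norm_num) (by norm_num)
    simpa using this
  rw [h2] at h1
  have h3 := ENNReal.toReal_strict_mono (by finiteness) h1
  simp only [ENNReal.toReal_mul, ENNReal.toReal_pow, ENNReal.toReal_ofNat] at h3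
  rw [ENNReal.toReal_ofReal hε.le] at h3
  simp only [Measure.real] at hN
  linarith

lemma not_mem_lev_far {n : ℕ} (hn : 1 ≤ n) {a : ℝ} (ha : 3 < a) {N : ℕ} (hN : 2 ^ N ≤ a / 3)
    {x : Eu n} (hx : x ∉ ball (0 : Eu n) a) : x ∉ lev (ball (0 : Eu n) 1) N := by
  intro h
  obtain ⟨y, ρ, hρ, hlt, hxy⟩ := mem_lev.1 h
  have hne : (ball (0 : Eu n) 1 ∩ ball y ρ).Nonempty := by
    rw [Set.nonempty_iff_ne_empty]
    intro he
    simp [he] at hlt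
  obtain ⟨w, hwU, hwy⟩ := hne
  have hρ4 : a / 3 * 1 ≤ ρ := by
    have h1 := mem_ball.1 hwU
    rw [mem_ball, not_lt] at hx
    have h3 := mem_ball.1 hxy
    have h4 := mem_ball.1 hwy
    have h5 := dist_triangle x y 0
    have h6 := dist_triangle y w 0
    rw [dist_comm y w] at h6
    linarith
  have h1 : ENNReal.ofReal (a / 3) ^ n * volume (ball (0 : Eu n) 1) <
      2 ^ N * volume (ball (0 : Eu n) 1) := by
    rw [← vol_scale y 0 (by linarith) one_pos]
    calc _ ≤ volume (ball y ρ) := measure_mono (ball_subset_ball hρ4)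
      _ < _ := hlt
      _ ≤ _ := by
        gcongr
        exact Set.inter_subset_left
  have h2 : ENNReal.ofReal (a / 3) ^ n < 2 ^ N := lt_of_mul_lt_mul_right' h1
  have h3 := ENNReal.toReal_strict_mono (by finiteness) h2
  simp only [ENNReal.toReal_pow, ENNReal.toReal_ofNat] at h3
  rw [ENNReal.toReal_ofReal (by linarith)] at h3
  have h4 : a / 3 ≤ (a / 3) ^ n := le_self_pow₀ (by linarith) (by omega)
  linarith

/-- Everything but the choice of `f` for a bounded measurable function. -/
lemma finish {n : ℕ} (hn : 1 ≤ n) {f : Eu n → ℝ} (hf : Measurable f) (hf1 : ∀ x, |f x| ≤ 1)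
    {D : ℝ} (hD : ∀ (z : Eu n) (l : ℝ), 0 < l →
      ∃ b, ∫ x in axisCube z l, |f x - b| ≤ D * volume.real (axisCube z l)) :
    LocallyIntegrable f volume ∧ ∀ (z : Eu n) (l : ℝ), 0 < l →
      ⨍ y in axisCube z l, |f y - ⨍ w in axisCube z l, f w| ≤ 2 * D := by
  have hloc : LocallyIntegrable f volume := by
    refine (locallyIntegrable_const (1 : ℝ)).mono hf.aestronglyMeasurable (ae_of_all _ fun x => ?_)
    simpa using hf1 x
  refine ⟨hloc, fun z l hl => ?_⟩
  obtain ⟨hm, c, hc1, hc2⟩ := cube_facts hn z hl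
  obtain ⟨b, hb⟩ := hD z l hl
  have hfin : volume (axisCube z l) ≠ ⊤ := ((measure_mono hc2).trans_lt measure_ball_lt_top).ne
  refine avg_osc ?_ hfin ?_ b D hb
  · exact ((measure_ball_pos volume c (by positivity)).trans_le (measure_mono hc1)).ne'
  · exact Measure.integrableOn_of_bounded hfin hf.aestronglyMeasurable (M := 1)
      (ae_of_all _ fun x => by simpa using hf1 x)

lemma exists_good {n : ℕ} (hn : 1 ≤ n) {ε a : ℝ} (hε : 0 < ε) (ha : 3 < a) {N : ℕ} (hN0 : 0 < N)
    (hNa : 2 ^ N ≤ a / 3) (hNε : 2 ^ N * ε ≤ volume.real (ball (0 : Eu n) (1 / 4)))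
    {E : Set (Eu n)} (hE2 : E ⊆ (ball (0 : Eu n) 2)ᶜ)
    (hE : volume (E ∩ ball (0 : Eu n) a) < ENNReal.ofReal ε) :
    ∃ f : Eu n → ℝ, LocallyIntegrable f volume ∧ (∀ x ∈ E, f x = 0) ∧
      (∀ x ∈ ball (0 : Eu n) 1, f x = 1) ∧ ∀ (z : Eu n) (l : ℝ), 0 < l →
        ⨍ y in axisCube z l, |f y - ⨍ w in axisCube z l, f w| ≤
          2 * (4 * (5 * (2 * (2 * n) + 1) * (2 * n + 2)) ^ n / N) := by
  obtain ⟨U₀, hEU₀, hU₀, hU₀ε⟩ := Set.exists_isOpen_lt_of_lt _ _ hE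
  set U := U₀ ∩ (closedBall (0 : Eu n) (3 / 2))ᶜ with hUdef
  have hU : IsOpen U := hU₀.inter isClosed_closedBall.isOpen_compl
  have hUε : volume U < ENNReal.ofReal ε := (measure_mono Set.inter_subset_left).trans_lt hU₀ε
  have hEU : E ∩ ball (0 : Eu n) a ⊆ U := by
    intro x hx
    refine ⟨hEU₀ hx, ?_⟩
    have := hE2 hx.1
    simp only [Set.mem_compl_iff, mem_ball, mem_closedBall, not_lt, not_le] at this ⊢
    linarith
  set B := ball (0 : Eu n) 1 with hB
  have hNp : (0 : ℝ) < N := by exact_mod_cast hN0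
  set f : Eu n → ℝ := fun x => max (lsum B N x / N - lsum U N x / N) 0 with hfdef
  have hfm : Measurable f :=
    (((measurable_lsum B N).div_const _).sub ((measurable_lsum U N).div_const _)).max
      measurable_const
  have hf1 : ∀ x, |f x| ≤ 1 := by
    intro x
    rw [abs_of_nonneg (le_max_right _ _)]
    have h1 : lsum B N x / N ≤ 1 := (div_le_one hNp).2 (lsum_le B N x)
    have h2 : 0 ≤ lsum U N x / N := div_nonneg (lsum_nonneg U N x) hNp.le
    exact max_le (by linarith) zero_le_one
  have key := finish hn hfm hf1 (D := 4 * (5 * (2 * (2 * n) + 1) * (2 * n + 2)) ^ n / N) ?_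
  · refine ⟨f, key.1, ?_, ?_, key.2⟩
    · intro x hx
      simp only [hfdef]
      apply max_eq_right
      by_cases hxa : x ∈ ball (0 : Eu n) a
      · rw [lsum_eq hU N (hEU ⟨hx, hxa⟩), div_self hNp.ne']
        have h1 : lsum B N x / N ≤ 1 := (div_le_one hNp).2 (lsum_le B N x)
        linarith
      · rw [lsum_eq_zero (not_mem_lev_far hn ha hNa hxa)]
        have h2 : 0 ≤ lsum U N x / N := div_nonneg (lsum_nonneg U N x) hNp.le
        simpa using h2
    · intro x hx
      simp only [hfdef]
      rw [lsum_eq isOpen_ball N hx,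
        lsum_eq_zero (not_mem_lev_near hε Set.inter_subset_right hUε hNε hx), div_self hNp.ne']
      simp
  · intro z l hl
    obtain ⟨hm, c, hc1, hc2⟩ := cube_facts hn z hl
    set Q := axisCube z l with hQ
    have hfin : volume Q ≠ ⊤ := ((measure_mono hc2).trans_lt measure_ball_lt_top).ne
    have hn' : (0 : ℝ) < n := by exact_mod_cast hn
    obtain ⟨b1, hb1⟩ := lsum_osc (U := B) measurableSet_ball (K := 2 * n) (by positivity)
      (half_pos hl) hm hc2 hc1 N
    obtain ⟨b2, hb2⟩ := lsum_osc (U := U) hU.measurableSet (K := 2 * n) (by positivity)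
      (half_pos hl) hm hc2 hc1 N
    have hint : ∀ (V : Set (Eu n)) (b : ℝ), IntegrableOn (fun x => |lsum V N x - b|) Q := by
      intro V b
      refine Measure.integrableOn_of_bounded hfin
        ((measurable_lsum V N).sub_const b).abs.aestronglyMeasurable (M := N + |b|)
        (ae_of_all _ fun x => ?_)
      rw [Real.norm_eq_abs, abs_abs]
      refine (abs_sub _ _).trans ?_
      rw [abs_of_nonneg (lsum_nonneg V N x)]
      linarith [lsum_le V N x]
    refine ⟨max (b1 / N - b2 / N) 0, ?_⟩
    have h1 : ∫ x in Q, |f x - max (b1 / N - b2 / N) 0| ≤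
        ∫ x in Q, (|lsum B N x - b1| + |lsum U N x - b2|) / N := by
      apply integral_mono_of_nonneg (ae_of_all _ fun x => abs_nonneg _)
      · exact ((hint B b1).add (hint U b2)).div_const _
      · refine ae_of_all _ fun x => ?_
        simp only [hfdef]
        refine (abs_max_sub_max_le_abs _ _ _).trans ?_
        have : lsum B N x / N - lsum U N x / N - (b1 / N - b2 / N) =
          ((lsum B N x - b1) - (lsum U N x - b2)) / N := by ring
        rw [this, abs_div, abs_of_pos hNp]
        gcongr
        exact abs_sub _ _
    rw [integral_div, integral_add (hint B b1) (hint U b2)] at h1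
    refine h1.trans ?_
    rw [div_mul_eq_mul_div]
    gcongr
    linarith

/-- For `0 < ε ≤ 1/2`, `a > 3` and `E ⊆ (2B)ᶜ` with `|E ∩ aB| < ε` (`B` the unit ball), there is
a locally integrable `f` with `f = 0` on `E`, `f = 1` on `B`, and BMO seminorm (over
axis-parallel cubes) at most `C(n)/min{log a, log(1/ε)}`. -/
theorem bmo_separating_function (n : ℕ) (hn : 1 ≤ n) :
    ∃ C > (0:ℝ), ∀ ε a : ℝ, 0 < ε → ε ≤ 1 / 2 → 3 < a →
      ∀ E : Set (EuclideanSpace ℝ (Fin n)), MeasurableSet E →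
        E ⊆ (ball (0 : EuclideanSpace ℝ (Fin n)) 2)ᶜ →
        volume (E ∩ ball (0 : EuclideanSpace ℝ (Fin n)) a) < ENNReal.ofReal ε →
        ∃ f : EuclideanSpace ℝ (Fin n) → ℝ,
          LocallyIntegrable f volume ∧
          (∀ x ∈ E, f x = 0) ∧
          (∀ x ∈ ball (0 : EuclideanSpace ℝ (Fin n)) 1, f x = 1) ∧
          ∀ (z : EuclideanSpace ℝ (Fin n)) (l : ℝ), 0 < l →
            ⨍ y in axisCube z l, |f y - ⨍ w in axisCube z l, f w| ≤
              C / min (Real.log a) (Real.log (1 / ε)) := by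
  have hv : 0 < volume.real (ball (0 : Eu n) (1 / 4)) :=
    ENNReal.toReal_pos (measure_ball_pos _ _ (by norm_num)).ne' measure_ball_lt_top.ne
  set v := volume.real (ball (0 : Eu n) (1 / 4)) with hvdef
  set D := Real.log 3 + |Real.log v| with hDdef
  set A : ℝ := (5 * (2 * (2 * n) + 1) * (2 * n + 2)) ^ n with hAdef
  have hA : 0 < A := by positivity
  have hD : 0 ≤ D := add_nonneg (Real.log_nonneg (by norm_num)) (abs_nonneg _)
  refine ⟨16 * A + 2 * (2 * D + 4), by positivity, ?_⟩
  intro ε a hε hε2 ha E _ hE2 hE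
  have hL1 : 0 < Real.log a := Real.log_pos (by linarith)
  have hL2 : 0 < Real.log (1 / ε) := Real.log_pos (by rw [lt_div_iff₀ hε]; linarith)
  set L := min (Real.log a) (Real.log (1 / ε)) with hLdef
  have hL : 0 < L := lt_min hL1 hL2
  by_cases hcase : L < 2 * D + 4
  · have key := finish hn (f := (ball (0 : Eu n) 1).indicator (fun _ => (1 : ℝ)))
      (measurable_const.indicator measurableSet_ball) (D := 1) ?_ ?_
    · refine ⟨_, key.1, ?_, ?_, fun z l hl => (key.2 z l hl).trans ?_⟩
      · intro x hx
        refine Set.indicator_of_notMem (fun h => hE2 hx ?_) _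
        exact ball_subset_ball (by norm_num) h
      · intro x hx
        exact Set.indicator_of_mem hx _
      · rw [le_div_iff₀ hL]
        linarith
    · intro x
      by_cases h : x ∈ ball (0 : Eu n) 1
      · rw [Set.indicator_of_mem h]; simp
      · rw [Set.indicator_of_notMem h]; simp
    · intro z l hl
      obtain ⟨hm, c, hc1, hc2⟩ := cube_facts hn z hl
      have hfin : volume (axisCube z l) ≠ ⊤ :=
        ((measure_mono hc2).trans_lt measure_ball_lt_top).ne
      refine ⟨0, ?_⟩
      have : ∫ x in axisCube z l, |(ball (0 : Eu n) 1).indicator (fun _ => (1 : ℝ)) x - 0| ≤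
          ∫ x in axisCube z l, (1 : ℝ) := by
        apply integral_mono_of_nonneg (ae_of_all _ fun x => abs_nonneg _)
        · exact integrableOn_const hfin
        · refine ae_of_all _ fun x => ?_
          by_cases h : x ∈ ball (0 : Eu n) 1
          · simp only [Set.indicator_of_mem h]; simp
          · simp only [Set.indicator_of_notMem h]; simp
      simpa using this
  · rw [not_lt] at hcase
    have hlog2 : 0 < Real.log 2 := Real.log_pos (by norm_num)
    have hlog2' : Real.log 2 < 1 := by linarith [Real.log_two_lt_d9]
    set N := ⌊(L - D) / Real.log 2⌋₊ with hNdef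
    have hq : L - D ≤ (L - D) / Real.log 2 := by
      rw [le_div_iff₀ hlog2]
      nlinarith
    have hN1 : L / 2 ≤ N := by
      have := Nat.lt_floor_add_one ((L - D) / Real.log 2)
      rw [← hNdef] at this
      linarith
    have hN0 : 0 < N := by
      have : (0 : ℝ) < N := by linarith
      exact_mod_cast this
    have hN2 : N * Real.log 2 ≤ L - D := by
      rw [← le_div_iff₀ hlog2]
      exact Nat.floor_le (by linarith)
    have hLa : L ≤ Real.log a := min_le_left _ _
    have hLε : L ≤ Real.log (1 / ε) := min_le_right _ _
    have hlog3 : 0 < Real.log 3 := Real.log_pos (by norm_num)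
    have hNa : (2 : ℝ) ^ N ≤ a / 3 := by
      rw [← Real.log_le_log_iff (by positivity) (by linarith), Real.log_pow,
        Real.log_div (by linarith) (by norm_num)]
      linarith [abs_nonneg (Real.log v)]
    have hNε : (2 : ℝ) ^ N * ε ≤ v := by
      rw [← Real.log_le_log_iff (by positivity) hv, Real.log_mul (by positivity) hε.ne',
        Real.log_pow]
      rw [one_div, Real.log_inv] at hLε
      linarith [neg_abs_le (Real.log v)]
    obtain ⟨f, h1, h2, h3, h4⟩ := exists_good hn hε ha hN0 hNa hNε hE2 hE
    refine ⟨f, h1, h2, h3, fun z l hl => (h4 z l hl).trans ?_⟩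
    rw [← hAdef]
    calc 2 * (4 * A / N) ≤ 2 * (4 * A / (L / 2)) := by gcongr
      _ = 16 * A / L := by ring
      _ ≤ _ := by gcongr; linarith
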